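/- Let C ⊆ 𝔽_q^N be a code with at least two codewords. If C is MDS with respect to the (P,w,π)-metric (i.e., max_{J ∈ 𝓘^r} Σ_{i∈J} k_i = N − ⌈log_q |C|⌉ where r = ⌊(d_{(P,w,π)}(C)−1)/M_w⌋), then C is MDS with respect to the (P,π)-metric (i.e., max_{J ∈ 𝓘^{d_{(P,π)}(C)−1}} Σ_{i∈J} k_i = N − ⌈log_q |C|⌉). -/

import Mathlib

open scoped Classical

noncomputable section

variable {F : Type*} [Field F] [Fintype F]
variable {ι : Type*} [Fintype ι] [PartialOrder ι]

/-- The block weight induced by `w`: the maximum of the weights of the coordinates. -/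
def blockWt (w : F → ℕ) {m : ℕ} (v : Fin m → F) : ℕ :=
  Finset.univ.sup fun t => w (v t)

/-- `M_w`, the maximum weight of an element of `F`. -/
def maxWt (w : F → ℕ) : ℕ := Finset.univ.sup w

/-- `D_r = {α ∈ F : w(α) = r}`. -/
def Dset (w : F → ℕ) (r : ℕ) : Finset F := Finset.univ.filter fun a => w a = r

/-- `D_r^k = {v ∈ F^k : w̃^k(v) = r}`. -/
def Dk (w : F → ℕ) (m r : ℕ) : Finset (Fin m → F) :=
  Finset.univ.filter fun v => blockWt w v = r

/-- The order ideal (down-set) of the poset generated by a finite set `A`. -/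
def genIdeal (A : Finset ι) : Finset ι := Finset.univ.filter fun i => ∃ j ∈ A, i ≤ j

/-- The set of maximal elements of a finite set `I`. -/
def maxElems (I : Finset ι) : Finset ι := I.filter fun i => ∀ j ∈ I, i ≤ j → j = i

/-- `I` is an order ideal (down-set) of the poset. -/
def IsIdeal (I : Finset ι) : Prop := ∀ a b : ι, a ≤ b → b ∈ I → a ∈ I

/-- The collection `𝓘_j^i` of ideals of cardinality `i` with exactly `j` maximal elements. -/
def idealsWithMax (ι : Type*) [Fintype ι] [PartialOrder ι] (j i : ℕ) : Finset (Finset ι) :=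
  Finset.univ.filter fun I => IsIdeal I ∧ I.card = i ∧ (maxElems I).card = j

/-- The π-support of a block vector. -/
def suppPi (k : ι → ℕ) (x : ∀ i, Fin (k i) → F) : Finset ι :=
  Finset.univ.filter fun i => x i ≠ 0

/-- The `(P,w,π)`-weight. -/
def wtP (w : F → ℕ) (k : ι → ℕ) (x : ∀ i, Fin (k i) → F) : ℕ :=
  ∑ i ∈ maxElems (genIdeal (suppPi k x)), blockWt w (x i)
    + maxWt w * ((genIdeal (suppPi k x)) \ maxElems (genIdeal (suppPi k x))).card

/-- The `(P,w,π)`-distance. -/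
def dP (w : F → ℕ) (k : ι → ℕ) (x y : ∀ i, Fin (k i) → F) : ℕ := wtP w k (x - y)

/-- The `(P,π)`-weight: the cardinality of the ideal generated by the π-support. -/
def wtPpi (k : ι → ℕ) (x : ∀ i, Fin (k i) → F) : ℕ := (genIdeal (suppPi k x)).card

/-- The collection `𝓘^r` of ideals of cardinality `r`. -/
def idealsCard (ι : Type*) [Fintype ι] [PartialOrder ι] (r : ℕ) : Finset (Finset ι) :=
  Finset.univ.filter fun I => IsIdeal I ∧ I.card = r

theorem aux_blockWt_le (w : F → ℕ) {m : ℕ} (v : Fin m → F) : blockWt w v ≤ maxWt w :=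
  Finset.sup_le fun t _ => Finset.le_sup (f := w) (Finset.mem_univ (v t))

theorem aux_wtP_le (w : F → ℕ) (k : ι → ℕ) (x : ∀ i, Fin (k i) → F) :
    wtP w k x ≤ maxWt w * wtPpi k x := by
  unfold wtP wtPpi
  have hsub : maxElems (genIdeal (suppPi k x)) ⊆ genIdeal (suppPi k x) := Finset.filter_subset _ _
  have h1 : ∑ i ∈ maxElems (genIdeal (suppPi k x)), blockWt w (x i)
      ≤ (maxElems (genIdeal (suppPi k x))).card * maxWt w := by
    rw [← smul_eq_mul]
    exact Finset.sum_le_card_nsmul _ _ _ fun i _ => aux_blockWt_le w (x i)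
  have h2 := Finset.card_sdiff_add_card_eq_card hsub
  rw [← h2]
  nlinarith

theorem aux_extend (J : Finset ι) (hJ : IsIdeal J) (n : ℕ) (h : J.card + n ≤ Fintype.card ι) :
    ∃ J' : Finset ι, IsIdeal J' ∧ J'.card = J.card + n ∧ J ⊆ J' := by
  induction n with
  | zero => exact ⟨J, hJ, rfl, subset_rfl⟩
  | succ n ih =>
    obtain ⟨K, hK, hc, hs⟩ := ih (by omega)
    have hne : (Kᶜ).Nonempty := by
      rw [← Finset.card_pos, Finset.card_compl]; omega
    obtain ⟨m, hm⟩ := Finset.exists_minimal hne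
    have hmK : m ∉ K := by simpa using hm.1
    refine ⟨insert m K, ?_, ?_, hs.trans (Finset.subset_insert _ _)⟩
    · intro a b hab hb
      rcases Finset.mem_insert.1 hb with rfl | hb
      · by_cases ha : a ∈ K
        · exact Finset.mem_insert_of_mem ha
        · have := hm.2 (by simpa using ha) hab
          rw [le_antisymm hab this]; exact Finset.mem_insert_self _ _
      · exact Finset.mem_insert_of_mem (hK a b hab hb)
    · rw [Finset.card_insert_of_notMem hmK, hc]; rfl

theorem aux_inj_card (k : ι → ℕ) (C : Finset (∀ i, Fin (k i) → F)) (J : Finset ι)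
    (h : ∀ c₁ ∈ C, ∀ c₂ ∈ C, (∀ i, i ∉ J → c₁ i = c₂ i) → c₁ = c₂) :
    C.card ≤ Fintype.card F ^ ((∑ i, k i) - ∑ i ∈ J, k i) := by
  have h1 : C.card ≤ (Finset.univ : Finset (∀ i : {i // i ∈ Jᶜ}, Fin (k i) → F)).card := by
    refine Finset.card_le_card_of_injOn (fun c i => c i) (fun _ _ => Finset.mem_univ _) ?_
    intro c₁ h₁ c₂ h₂ he
    exact h c₁ h₁ c₂ h₂ fun i hi => congrFun he ⟨i, by simpa using hi⟩
  refine h1.trans (le_of_eq ?_)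
  rw [Finset.card_univ, Fintype.card_pi]
  simp only [Fintype.card_pi, Finset.prod_const, Finset.card_univ, Fintype.card_fin]
  rw [Finset.prod_pow_eq_pow_sum]
  congr 1
  have h2 := Finset.sum_add_sum_compl J k
  have h3 : ∑ i : {i // i ∈ Jᶜ}, k i = ∑ i ∈ Jᶜ, k i := Finset.sum_coe_sort (Jᶜ) k
  rw [h3]; omega

/-- a code that is MDS with respect to the `(P,w,π)`-metric is also MDS with
respect to the `(P,π)`-metric. -/
theorem stmt17 (w : F → ℕ) (hw0 : ∀ a : F, w a = 0 ↔ a = 0)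
    (hwneg : ∀ a : F, w (-a) = w a) (hwadd : ∀ a b : F, w (a + b) ≤ w a + w b)
    (k : ι → ℕ) (C : Finset (∀ i, Fin (k i) → F)) (hC : 2 ≤ C.card)
    (dw dpi : ℕ)
    (hdw : dw = sInf {s : ℕ | ∃ c₁ ∈ C, ∃ c₂ ∈ C, c₁ ≠ c₂ ∧ wtP w k (c₁ - c₂) = s})
    (hdpi : dpi = sInf {s : ℕ | ∃ c₁ ∈ C, ∃ c₂ ∈ C, c₁ ≠ c₂ ∧ wtPpi k (c₁ - c₂) = s})
    (hMDS : (idealsCard ι ((dw - 1) / maxWt w)).sup (fun J => ∑ i ∈ J, k i) =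
      (∑ i : ι, k i) - Nat.clog (Fintype.card F) C.card) :
    (idealsCard ι (dpi - 1)).sup (fun J => ∑ i ∈ J, k i) =
      (∑ i : ι, k i) - Nat.clog (Fintype.card F) C.card := by
  set S := {s : ℕ | ∃ c₁ ∈ C, ∃ c₂ ∈ C, c₁ ≠ c₂ ∧ wtPpi k (c₁ - c₂) = s} with hS
  have hSne : S.Nonempty := by
    obtain ⟨a, ha, b, hb, hab⟩ := Finset.one_lt_card.1 hC
    exact ⟨_, a, ha, b, hb, hab, rfl⟩
  have hmem : dpi ∈ S := hdpi ▸ Nat.sInf_mem hSne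
  obtain ⟨a, ha, b, hb, hab, hd⟩ := hmem
  have hdn : dpi ≤ Fintype.card ι := by rw [← hd]; exact Finset.card_le_univ _
  have hdpos : 0 < dpi := by
    obtain ⟨i, hi⟩ := Function.ne_iff.1 hab
    rw [← hd]
    refine Finset.card_pos.2 ⟨i, ?_⟩
    simp only [genIdeal, suppPi, Finset.mem_filter, Finset.mem_univ, true_and]
    exact ⟨i, by simpa [sub_eq_zero] using hi, le_rfl⟩
  have hdw' : dw ≤ maxWt w * dpi := by
    rw [hdw, ← hd]
    refine le_trans (Nat.sInf_le ?_) (aux_wtP_le w k (a - b))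
    exact ⟨a, ha, b, hb, hab, rfl⟩
  have hM : 0 < maxWt w := by
    have h1 : w 1 ≤ maxWt w := Finset.le_sup (f := w) (Finset.mem_univ 1)
    have h2 : w 1 ≠ 0 := fun h => one_ne_zero ((hw0 1).1 h)
    omega
  have hr : (dw - 1) / maxWt w ≤ dpi - 1 := by
    have hpos : 0 < maxWt w * dpi := Nat.mul_pos hM hdpos
    have : (dw - 1) / maxWt w < dpi := Nat.div_lt_of_lt_mul (by omega)
    omega
  apply le_antisymm
  · refine Finset.sup_le fun J hJ => ?_
    simp only [idealsCard, Finset.mem_filter, Finset.mem_univ, true_and] at hJ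
    obtain ⟨hJi, hJc⟩ := hJ
    have hcard := aux_inj_card k C J (by
      intro c₁ h₁ c₂ h₂ he
      by_contra hne
      have h3 : dpi ≤ wtPpi k (c₁ - c₂) := by
        rw [hdpi]; exact Nat.sInf_le ⟨c₁, h₁, c₂, h₂, hne, rfl⟩
      have h4 : wtPpi k (c₁ - c₂) ≤ J.card := by
        refine Finset.card_le_card fun i hi => ?_
        simp only [genIdeal, suppPi, Finset.mem_filter, Finset.mem_univ, true_and] at hi
        obtain ⟨j, hj, hij⟩ := hi
        refine hJi i j hij ?_
        by_contra hjJ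
        exact hj (by simp [he j hjJ])
      omega)
    have h5 := Nat.clog_le_of_le_pow hcard
    have h6 : ∑ i ∈ J, k i ≤ ∑ i, k i := Finset.sum_le_univ_sum_of_nonneg (by simp)
    show ∑ i ∈ J, k i ≤ _
    omega
  · rw [← hMDS]
    refine Finset.sup_le fun J hJ => ?_
    simp only [idealsCard, Finset.mem_filter, Finset.mem_univ, true_and] at hJ
    obtain ⟨J', h1, h2, h3⟩ := aux_extend J hJ.1 (dpi - 1 - J.card) (by omega)
    refine (Finset.sum_le_sum_of_subset h3).trans
      (Finset.le_sup (f := fun J => ∑ i ∈ J, k i) (b := J') ?_)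
    simp only [idealsCard, Finset.mem_filter, Finset.mem_univ, true_and]
    exact ⟨h1, by omega⟩
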